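/- (Weighted zonotope containment.) Let c₁, c₂ ∈ ℝ^q, G₁ ∈ ℝ^{q×r}, G₂ ∈ ℝ^{q×s}, and let α ∈ ℝ^s with α_i > 0 for all i. If there exist a matrix Γ ∈ ℝ^{s×r} and a vector γ ∈ ℝ^s such that G₁ = G₂Γ, c₂ − c₁ = G₂γ, and for every row index i ∈ {1,…,s} the absolute row sum satisfies Σ_{j=1}^{r} |Γ_{ij}| + |γ_i| ≤ α_i, then Z(c₁,G₁) ⊆ Z(c₂, G₂·Diag(α)), where Diag(α) is the s×s diagonal matrix with diagonal α. -/

import Mathlib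

/-- The zonotope `Z(c, G) = { c + G ξ : ‖ξ‖_∞ ≤ 1 }`. -/
def zonotope {n ι : Type*} [Fintype ι] (c : n → ℝ) (G : Matrix n ι ℝ) : Set (n → ℝ) :=
  {x | ∃ ξ : ι → ℝ, (∀ i, |ξ i| ≤ 1) ∧ x = c + G.mulVec ξ}

/-!
If `x = c₁ + G₁ ξ` with `‖ξ‖_∞ ≤ 1`, then `x = c₂ + G₂ (Γ ξ - γ)`, and the row-sum condition bounds
the `i`-th coordinate of the new coefficient vector `Γ ξ - γ` by `α i`. Scaling the generators by
`α` is the same as letting the coefficients range over the box with half-widths `|α i|`.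
-/

open scoped Matrix

section

variable {n ι κ : Type*} [Fintype ι] [Fintype κ] [DecidableEq κ]

theorem abs_dotProduct_le_sum_abs {R : Type*} [Ring R] [LinearOrder R] [IsOrderedRing R]
    (v : ι → R) {ξ : ι → R} (hξ : ∀ j, |ξ j| ≤ 1) : |v ⬝ᵥ ξ| ≤ ∑ j, |v j| :=
  calc |∑ j, v j * ξ j| ≤ ∑ j, |v j * ξ j| := Finset.abs_sum_le_sum_abs _ _
    _ = ∑ j, |v j| * |ξ j| := by simp only [abs_mul]
    _ ≤ ∑ j, |v j| := Finset.sum_le_sum fun j _ ↦ mul_le_of_le_one_right (abs_nonneg _) (hξ j)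

theorem mem_zonotope_mul_diagonal {c x : n → ℝ} {G : Matrix n κ ℝ} {α : κ → ℝ} :
    x ∈ zonotope c (G * Matrix.diagonal α) ↔
      ∃ η : κ → ℝ, (∀ i, |η i| ≤ |α i|) ∧ x = c + G *ᵥ η := by
  constructor
  · rintro ⟨ξ, hξ, rfl⟩
    refine ⟨Matrix.diagonal α *ᵥ ξ, fun i ↦ ?_, by rw [Matrix.mulVec_mulVec]⟩
    rw [Matrix.mulVec_diagonal, abs_mul]
    exact mul_le_of_le_one_right (abs_nonneg _) (hξ i)
  · rintro ⟨η, hη, rfl⟩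
    -- Where `α i = 0` the bound forces `η i = 0`, so the junk value `0 / 0 = 0` does no harm.
    have diagonal_mulVec_div : Matrix.diagonal α *ᵥ (η / α) = η := by
      ext i
      rw [Matrix.mulVec_diagonal, Pi.div_apply]
      exact mul_div_cancel_of_imp' fun hαi ↦ by simpa [hαi] using hη i
    refine ⟨η / α, fun i ↦ ?_, by rw [← Matrix.mulVec_mulVec, diagonal_mulVec_div]⟩
    rw [Pi.div_apply, abs_div]
    exact div_le_one_of_le₀ (hη i) (abs_nonneg _)

theorem weighted_zonotope_containment_general (c₁ c₂ : n → ℝ)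
    (G₁ : Matrix n ι ℝ) (G₂ : Matrix n κ ℝ) (α : κ → ℝ) (Γ : Matrix κ ι ℝ) (γ : κ → ℝ)
    (hG : G₁ = G₂ * Γ) (hc : c₂ - c₁ = G₂ *ᵥ γ)
    (hrow : ∀ i, (∑ j, |Γ i j|) + |γ i| ≤ α i) :
    zonotope c₁ G₁ ⊆ zonotope c₂ (G₂ * Matrix.diagonal α) := by
  rintro x ⟨ξ, hξ, rfl⟩
  refine mem_zonotope_mul_diagonal.mpr ⟨Γ *ᵥ ξ - γ, fun i ↦ ?_, ?_⟩
  · calc |(Γ *ᵥ ξ) i - γ i| ≤ |(Γ *ᵥ ξ) i| + |γ i| := abs_sub _ _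
      _ ≤ (∑ j, |Γ i j|) + |γ i| := by gcongr; exact abs_dotProduct_le_sum_abs (Γ i) hξ
      _ ≤ α i := hrow i
      _ ≤ |α i| := le_abs_self _
  · calc c₁ + G₁ *ᵥ ξ = c₂ + (G₂ *ᵥ (Γ *ᵥ ξ) - (c₂ - c₁)) := by
          rw [hG, Matrix.mulVec_mulVec]; abel
      _ = c₂ + G₂ *ᵥ (Γ *ᵥ ξ - γ) := by rw [hc, Matrix.mulVec_sub]

end

/-- Weighted zonotope containment: for `α > 0` componentwise, if `G₁ = G₂ Γ`, `c₂ - c₁ = G₂ γ`,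
and each absolute row sum of `[Γ, γ]` is at most `α_i`, then
`Z(c₁, G₁) ⊆ Z(c₂, G₂ · Diag(α))`. -/
theorem weighted_zonotope_containment {q r s : ℕ} (c₁ c₂ : Fin q → ℝ)
    (G₁ : Matrix (Fin q) (Fin r) ℝ) (G₂ : Matrix (Fin q) (Fin s) ℝ)
    (α : Fin s → ℝ) (hα : ∀ i, 0 < α i)
    (Γ : Matrix (Fin s) (Fin r) ℝ) (γ : Fin s → ℝ)
    (hG : G₁ = G₂ * Γ) (hc : c₂ - c₁ = G₂.mulVec γ)
    (hrow : ∀ i : Fin s, (∑ j : Fin r, |Γ i j|) + |γ i| ≤ α i) :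
    zonotope c₁ G₁ ⊆ zonotope c₂ (G₂ * Matrix.diagonal α) :=
  weighted_zonotope_containment_general c₁ c₂ G₁ G₂ α Γ γ hG hc hrow
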